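/- arXiv:0802.3819 — 9 statements merged into one kernel-verified Lean document; each statement's English description precedes it below -/
import Mathlib

section
/- Let L ⊆ ℰ be a subspace with L = L^⊥, and let n = dim V. Then dim L = (1 − n)·dim 𝐛(L) + n², equivalently dim L = dim 𝐛(L) + n·(n − dim 𝐛(L)). -/
variable {V : Type*} [AddCommGroup V] [Module ℝ V] [FiniteDimensional ℝ V]

/-- The bracket of the omni-Lie algebra `ℰ = End(V) × V`:
`⦃(A,u),(B,v)⦄ = (A∘B − B∘A, A(v))`. -/
def obr (X Y : (V →ₗ[ℝ] V) × V) : (V →ₗ[ℝ] V) × V :=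
  (X.1 ∘ₗ Y.1 - Y.1 ∘ₗ X.1, X.1 Y.2)

/-- The symmetric `V`-valued pairing `⟨(A,u),(B,v)⟩ = (1/2)(A(v) + B(u))`. -/
noncomputable def opair (X Y : (V →ₗ[ℝ] V) × V) : V :=
  (1/2 : ℝ) • (X.1 Y.2 + Y.1 X.2)

/-- `S^⊥ = {X ∈ ℰ : ⟨X,l⟩ = 0 for all l ∈ S}`. -/
def perpSet (S : Set ((V →ₗ[ℝ] V) × V)) : Set ((V →ₗ[ℝ] V) × V) :=
  {X | ∀ l ∈ S, opair X l = 0}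

/-! The projection `𝐛` gives a short exact sequence `0 → L ∩ End(V) → L → 𝐛(L) → 0`. Since
`⟨(A, 0), l⟩ = (1/2) A(𝐛 l)`, an endomorphism `A` lies in `L = L^⊥` exactly when it vanishes on
`𝐛(L)`, so the kernel is isomorphic to `Hom(V/𝐛(L), V)`. -/

/-- The annihilator `p⁰` of a submodule `p ⊆ M` in `Hom(M, N)`, encoded as the kernel of the
restriction map `Hom(M, N) → Hom(p, N)`. For `N = R` it is `p.dualAnnihilator`. -/
def homAnnihilator {R M : Type*} (N : Type*) [CommSemiring R] [AddCommMonoid M] [AddCommMonoid N]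
    [Module R M] [Module R N] (p : Submodule R M) : Submodule R (M →ₗ[R] N) :=
  LinearMap.ker (LinearMap.lcomp R N p.subtype)

theorem mem_homAnnihilator {R M N : Type*} [CommSemiring R] [AddCommMonoid M] [AddCommMonoid N]
    [Module R M] [Module R N] {p : Submodule R M} {A : M →ₗ[R] N} :
    A ∈ homAnnihilator N p ↔ ∀ x ∈ p, A x = 0 := by
  simp [homAnnihilator, LinearMap.ext_iff]

theorem range_lcomp_mkQ {R M : Type*} (N : Type*) [CommRing R] [AddCommGroup M] [AddCommGroup N]
    [Module R M] [Module R N] (p : Submodule R M) :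
    LinearMap.range (LinearMap.lcomp R N p.mkQ) = homAnnihilator N p :=
  (LinearMap.exact_lcomp_of_exact_of_surjective N (LinearMap.exact_subtype_mkQ p)
    p.mkQ_surjective).linearMap_ker_eq.symm

theorem finrank_homAnnihilator {K M : Type*} (N : Type*) [Field K] [AddCommGroup M]
    [AddCommGroup N] [Module K M] [Module K N] [FiniteDimensional K M] [FiniteDimensional K N]
    (p : Submodule K M) :
    Module.finrank K (homAnnihilator N p) =
      Module.finrank K N * (Module.finrank K M - Module.finrank K p) := by
  rw [← range_lcomp_mkQ, LinearMap.finrank_range_of_inj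
    (LinearMap.lcomp_injective_of_surjective p.mkQ p.mkQ_surjective), Module.finrank_linearMap,
    Submodule.finrank_quotient, mul_comm]

theorem finrank_map_snd_add_finrank_comap_inl {K M N : Type*} [DivisionRing K] [AddCommGroup M]
    [AddCommGroup N] [Module K M] [Module K N] (L : Submodule K (M × N)) [FiniteDimensional K L] :
    Module.finrank K (L.map (LinearMap.snd K M N)) +
        Module.finrank K (L.comap (LinearMap.inl K M N)) =
      Module.finrank K L := by
  let π : L →ₗ[K] N := (LinearMap.snd K M N).domRestrict L
  have range_eq : LinearMap.range π = L.map (LinearMap.snd K M N) :=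
    LinearMap.range_domRestrict L _
  have ker_eq : (LinearMap.ker π).map L.subtype =
      (L.comap (LinearMap.inl K M N)).map (LinearMap.inl K M N) := by
    rw [LinearMap.ker_domRestrict, Submodule.map_comap_subtype, Submodule.map_comap_eq,
      LinearMap.range_inl, inf_comm]
  have finrank_ker : Module.finrank K (LinearMap.ker π) =
      Module.finrank K (L.comap (LinearMap.inl K M N)) := by
    rw [← Submodule.finrank_map_subtype_eq L (LinearMap.ker π), ker_eq]
    exact (Submodule.equivMapOfInjective _ LinearMap.inl_injective _).finrank_eq.symm
  rw [← LinearMap.finrank_range_add_finrank_ker π, range_eq, finrank_ker]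

theorem maximal_isotropic_dim_general {K V W : Type*} [Field K] [AddCommGroup V] [AddCommGroup W]
    [Module K V] [Module K W] [FiniteDimensional K V] [FiniteDimensional K W]
    (L : Submodule K ((V →ₗ[K] W) × V))
    (hL : L.comap (LinearMap.inl K (V →ₗ[K] W) V) =
      homAnnihilator W (L.map (LinearMap.snd K (V →ₗ[K] W) V))) :
    (Module.finrank K L : ℤ) =
      (1 - (Module.finrank K W : ℤ)) *
          Module.finrank K (L.map (LinearMap.snd K (V →ₗ[K] W) V)) +
        (Module.finrank K W : ℤ) * Module.finrank K V ∧
    Module.finrank K L =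
      Module.finrank K (L.map (LinearMap.snd K (V →ₗ[K] W) V)) +
        Module.finrank K W *
          (Module.finrank K V - Module.finrank K (L.map (LinearMap.snd K (V →ₗ[K] W) V))) := by
  have dim_L := finrank_map_snd_add_finrank_comap_inl L
  rw [hL, finrank_homAnnihilator] at dim_L
  refine ⟨?_, dim_L.symm⟩
  rw [← dim_L]
  push_cast [Submodule.finrank_le]
  ring

omit [FiniteDimensional ℝ V] in
theorem opair_inl_eq_zero_iff {A : V →ₗ[ℝ] V} {X : (V →ₗ[ℝ] V) × V} :
    opair (A, 0) X = 0 ↔ A X.2 = 0 := by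
  simp [opair]

omit [FiniteDimensional ℝ V] in
theorem comap_inl_eq_homAnnihilator_of_eq_perpSet {L : Submodule ℝ ((V →ₗ[ℝ] V) × V)}
    (hL : (L : Set ((V →ₗ[ℝ] V) × V)) = perpSet (L : Set ((V →ₗ[ℝ] V) × V))) :
    L.comap (LinearMap.inl ℝ (V →ₗ[ℝ] V) V) =
      homAnnihilator V (L.map (LinearMap.snd ℝ (V →ₗ[ℝ] V) V)) := by
  ext A
  calc (A, 0) ∈ L ↔ (A, 0) ∈ perpSet (L : Set ((V →ₗ[ℝ] V) × V)) := by
        rw [← hL, SetLike.mem_coe]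
    _ ↔ ∀ X ∈ L, A X.2 = 0 := forall₂_congr fun _ _ ↦ opair_inl_eq_zero_iff
    _ ↔ A ∈ homAnnihilator V (L.map (LinearMap.snd ℝ (V →ₗ[ℝ] V) V)) := by
        simp only [mem_homAnnihilator, Submodule.mem_map, forall_exists_index, and_imp,
          forall_apply_eq_imp_iff₂, LinearMap.snd_apply]

/-- If `L = L^⊥` and `n = dim V`, then `dim L = (1 − n)·dim 𝐛(L) + n²`,
equivalently `dim L = dim 𝐛(L) + n·(n − dim 𝐛(L))`. -/
theorem maximal_isotropic_dim (L : Submodule ℝ ((V →ₗ[ℝ] V) × V))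
    (hL : (L : Set ((V →ₗ[ℝ] V) × V)) = perpSet (L : Set ((V →ₗ[ℝ] V) × V))) :
    (Module.finrank ℝ L : ℤ) =
      (1 - (Module.finrank ℝ V : ℤ)) *
          Module.finrank ℝ (L.map (LinearMap.snd ℝ (V →ₗ[ℝ] V) V)) +
        (Module.finrank ℝ V : ℤ) ^ 2 ∧
    Module.finrank ℝ L =
      Module.finrank ℝ (L.map (LinearMap.snd ℝ (V →ₗ[ℝ] V) V)) +
        Module.finrank ℝ V *
          (Module.finrank ℝ V - Module.finrank ℝ (L.map (LinearMap.snd ℝ (V →ₗ[ℝ] V) V))) := by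
  simpa only [sq] using
    maximal_isotropic_dim_general L (comap_inl_eq_homAnnihilator_of_eq_perpSet hL)
end

section
/- Let L ⊆ ℰ be a subspace with L = L^⊥, and let W = 𝐛(L). Then there exists a linear map s : W → ℰ whose image lies in L, satisfying 𝐛∘s = id_W and L = s(W) + W⁰; moreover s(W) is isotropic, i.e. ⟨s(w), s(w')⟩ = 0 for all w, w' ∈ W. -/
variable {V : Type*} [AddCommGroup V] [Module ℝ V] [FiniteDimensional ℝ V]

/-- `W⁰ = {(A,0) ∈ ℰ : A(w) = 0 for all w ∈ W}`. -/
def ann (W : Submodule ℝ V) : Submodule ℝ ((V →ₗ[ℝ] V) × V) where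
  carrier := {X | X.2 = 0 ∧ ∀ w ∈ W, X.1 w = 0}
  add_mem' := by
    rintro X Y ⟨hX2, hX1⟩ ⟨hY2, hY1⟩
    exact ⟨by simp [hX2, hY2], fun w hw => by simp [hX1 w hw, hY1 w hw]⟩
  zero_mem' := ⟨rfl, fun w _ => rfl⟩
  smul_mem' := by
    rintro c X ⟨hX2, hX1⟩
    exact ⟨by simp [hX2], fun w hw => by simp [hX1 w hw]⟩

/-! The kernel of `𝐛` on `L^⊥` is `𝐛(L)⁰` for every subspace `L`, because
`⟨(A,0),(B,v)⟩ = (1/2)A(v)`. When `L = L^⊥` this makes `W⁰` the kernel of `𝐛 : L → W`, so any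
linear section of that surjection splits `L` as `s(W) + W⁰`; isotropy is inherited from `L`. -/

section LinearSection

variable {R M N : Type*} [Ring R] [AddCommGroup M] [Module R M] [AddCommGroup N] [Module R N]

theorem exists_linearMap_section_of_map (p : M →ₗ[R] N) (L : Submodule R M)
    [Module.Projective R (L.map p)] :
    ∃ s : L.map p →ₗ[R] M, LinearMap.range s ≤ L ∧ p ∘ₗ s = (L.map p).subtype := by
  obtain ⟨t, ht⟩ := (p.submoduleMap L).exists_rightInverse_of_surjective
    (LinearMap.range_eq_top.mpr (p.submoduleMap_surjective L))
  refine ⟨L.subtype ∘ₗ t, ?_,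
    LinearMap.ext fun w => congrArg Subtype.val (LinearMap.congr_fun ht w)⟩
  rintro _ ⟨w, rfl⟩
  exact (t w).2

theorem range_section_sup_inf_ker {p : M →ₗ[R] N} {L : Submodule R M} {s : L.map p →ₗ[R] M}
    (hsL : LinearMap.range s ≤ L) (hs : p ∘ₗ s = (L.map p).subtype) :
    LinearMap.range s ⊔ L ⊓ LinearMap.ker p = L := by
  have map_range : (LinearMap.range s).map p = L.map p := by
    rw [← LinearMap.range_comp, hs, Submodule.range_subtype]
  have le_sup_ker : L ≤ LinearMap.range s ⊔ LinearMap.ker p := by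
    rw [← Submodule.comap_map_eq, map_range]
    exact Submodule.le_comap_map p L
  rw [inf_comm, ← sup_inf_assoc_of_le _ hsL]
  exact inf_eq_right.mpr le_sup_ker

end LinearSection

section OmniLie

omit [FiniteDimensional ℝ V]

theorem opair_eq_zero_iff_of_snd_eq_zero {X : (V →ₗ[ℝ] V) × V} (hX : X.2 = 0)
    (Y : (V →ₗ[ℝ] V) × V) : opair X Y = 0 ↔ X.1 Y.2 = 0 := by
  simp [opair, hX]

theorem mem_ann_map_snd_iff {L : Submodule ℝ ((V →ₗ[ℝ] V) × V)} {X : (V →ₗ[ℝ] V) × V} :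
    X ∈ ann (L.map (LinearMap.snd ℝ (V →ₗ[ℝ] V) V)) ↔ X ∈ perpSet (L : Set _) ∧ X.2 = 0 := by
  rw [and_comm]
  refine and_congr_right fun hX => Set.forall_mem_image.trans ?_
  exact forall₂_congr fun Y _ => (opair_eq_zero_iff_of_snd_eq_zero hX Y).symm

theorem inf_ker_snd_eq_ann {L : Submodule ℝ ((V →ₗ[ℝ] V) × V)}
    (hL : (L : Set ((V →ₗ[ℝ] V) × V)) = perpSet (L : Set ((V →ₗ[ℝ] V) × V))) :
    L ⊓ LinearMap.ker (LinearMap.snd ℝ (V →ₗ[ℝ] V) V) =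
      ann (L.map (LinearMap.snd ℝ (V →ₗ[ℝ] V) V)) := by
  ext X
  rw [mem_ann_map_snd_iff, ← hL]
  rfl

theorem maximal_isotropic_section_general (L : Submodule ℝ ((V →ₗ[ℝ] V) × V))
    (hL : (L : Set ((V →ₗ[ℝ] V) × V)) = perpSet (L : Set ((V →ₗ[ℝ] V) × V)))
    (W : Submodule ℝ V) (hW : W = L.map (LinearMap.snd ℝ (V →ₗ[ℝ] V) V)) :
    ∃ s : W →ₗ[ℝ] (V →ₗ[ℝ] V) × V,
      (∀ w : W, s w ∈ L) ∧
      (∀ w : W, (s w).2 = (w : V)) ∧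
      L = LinearMap.range s ⊔ ann W ∧
      (∀ w w' : W, opair (s w) (s w') = 0) := by
  subst hW
  have : Module.Free ℝ (L.map (LinearMap.snd ℝ (V →ₗ[ℝ] V) V)) := .of_divisionRing ℝ _
  obtain ⟨s, range_le, snd_comp⟩ :=
    exists_linearMap_section_of_map (LinearMap.snd ℝ (V →ₗ[ℝ] V) V) L
  have mem_L (w) : s w ∈ L := range_le ⟨w, rfl⟩
  have isotropic : (L : Set ((V →ₗ[ℝ] V) × V)) ⊆ perpSet L := hL.subset
  refine ⟨s, mem_L, LinearMap.congr_fun snd_comp, ?_, fun w w' => isotropic (mem_L w) _ (mem_L w')⟩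
  rw [← inf_ker_snd_eq_ann hL, range_section_sup_inf_ker range_le snd_comp]

end OmniLie

/-- If `L = L^⊥` and `W = 𝐛(L)`, there is a linear isotropic section `s : W → ℰ`
with image in `L`, `𝐛 ∘ s = id`, and `L = s(W) + W⁰`. -/
theorem maximal_isotropic_section (L : Submodule ℝ ((V →ₗ[ℝ] V) × V))
    (hL : (L : Set ((V →ₗ[ℝ] V) × V)) = perpSet (L : Set ((V →ₗ[ℝ] V) × V)))
    (W : Submodule ℝ V) (hW : W = L.map (LinearMap.snd ℝ (V →ₗ[ℝ] V) V)) :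
    ∃ s : W →ₗ[ℝ] (V →ₗ[ℝ] V) × V,
      (∀ w : W, s w ∈ L) ∧
      (∀ w : W, (s w).2 = (w : V)) ∧
      L = LinearMap.range s ⊔ ann W ∧
      (∀ w w' : W, opair (s w) (s w') = 0) :=
  maximal_isotropic_section_general L hL W hW
end

section
/- Let L ⊆ ℰ be a Dirac structure and W = 𝐛(L). Then there is a unique bilinear map [·,·] : W × W → V such that [u,v] = A(v) whenever (A,u) ∈ L and v ∈ W (in particular A(v) is independent of the choice of A with (A,u) ∈ L); this bracket takes values in W, is antisymmetric, and satisfies the Jacobi identity, so that (W, [·,·]) is a real Lie algebra. -/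
variable {V : Type*} [AddCommGroup V] [Module ℝ V] [FiniteDimensional ℝ V]

/-!
The omni-Lie bracket satisfies the Leibniz identity, and on an isotropic subalgebra `L` its second
component is alternating. Isotropy `A v = - B u` for `(A, u), (B, v) ∈ L` also shows that the
action of `(A, u)` on `W = 𝐛(L)` vanishes when `u = 0`, so the action descends along the surjection
`𝐛 : L → W`. The descended operation makes `𝐛` a homomorphism, and the Leibniz identity for an
alternating bracket is the Jacobi identity.
-/

namespace OmniLie

variable {R M : Type*} [CommRing R] [AddCommGroup M] [Module R M]

/-- The bracket `⦃(A,u),(B,v)⦄ = (A B - B A, A v)` of the omni-Lie algebra `End(M) × M` of a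
module `M` over a commutative ring, extending `obr` beyond real vector spaces. -/
def bracket (X Y : Module.End R M × M) : Module.End R M × M :=
  (X.1 * Y.1 - Y.1 * X.1, X.1 Y.2)

theorem bracket_leibniz (X Y Z : Module.End R M × M) :
    bracket X (bracket Y Z) = bracket (bracket X Y) Z + bracket Y (bracket X Z) := by
  apply Prod.ext
  · simp only [bracket, Prod.fst_add]
    noncomm_ring
  · simp only [bracket, Prod.snd_add, LinearMap.sub_apply, Module.End.mul_apply, sub_add_cancel]

/-- A submodule of the omni-Lie algebra which is closed under the bracket and isotropic, as needed
for it to induce a Lie algebra. Isotropy is imposed through the quadratic form `(A,u) ↦ A u`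
instead of its polar form `A v + B u`, so that the induced bracket is alternating even where `2` is
not invertible. -/
structure IsIsotropicSubalgebra (L : Submodule R (Module.End R M × M)) : Prop where
  apply_self : ∀ ⦃X⦄, X ∈ L → X.1 X.2 = 0
  bracket_mem : ∀ ⦃X⦄, X ∈ L → ∀ ⦃Y⦄, Y ∈ L → bracket X Y ∈ L

/-- The image `𝐛(L)` of `L` under the projection `𝐛(A,u) = u`, the carrier of the induced Lie
algebra. -/
abbrev base (L : Submodule R (Module.End R M × M)) : Submodule R M :=
  L.map (LinearMap.snd R (Module.End R M) M)

/-- The projection `𝐛`, as a map from `L` onto its image. -/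
abbrev proj (L : Submodule R (Module.End R M × M)) : L →ₗ[R] base L :=
  (LinearMap.snd R (Module.End R M) M).submoduleMap L

theorem proj_surjective (L : Submodule R (Module.End R M × M)) : Function.Surjective (proj L) :=
  LinearMap.submoduleMap_surjective _ L

namespace IsIsotropicSubalgebra

variable {L : Submodule R (Module.End R M × M)} (hL : IsIsotropicSubalgebra L)
include hL

theorem apply_eq_neg {X Y : Module.End R M × M} (hX : X ∈ L) (hY : Y ∈ L) :
    X.1 Y.2 = -Y.1 X.2 := by
  have hXY : (X.1 + Y.1) (X.2 + Y.2) = 0 := hL.apply_self (L.add_mem hX hY)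
  simp only [LinearMap.add_apply, map_add, hL.apply_self hX, hL.apply_self hY, zero_add,
    add_zero] at hXY
  exact eq_neg_of_add_eq_zero_right hXY

theorem apply_mem_base {X : Module.End R M × M} (hX : X ∈ L) {v : M} (hv : v ∈ base L) :
    X.1 v ∈ base L := by
  obtain ⟨Y, hY, rfl⟩ := hv
  exact ⟨bracket X Y, hL.bracket_mem hX hY, rfl⟩

/-- The action of `L` on `𝐛(L)` through the anchor `(A,u) ↦ A`. -/
def action : L →ₗ[R] Module.End R (base L) where
  toFun X := X.1.1.restrict fun _ => hL.apply_mem_base X.2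
  map_add' _ _ := rfl
  map_smul' _ _ := rfl

theorem ker_proj_le_ker_action : LinearMap.ker (proj L) ≤ LinearMap.ker hL.action := by
  intro X hX
  have hX₂ : X.1.2 = 0 := congrArg Subtype.val hX
  ext ⟨_, Y, hY, rfl⟩
  calc X.1.1 Y.2 = -Y.1 X.1.2 := hL.apply_eq_neg X.2 hY
    _ = 0 := by rw [hX₂, map_zero, neg_zero]

/-- The bracket `[u,v] = A v`, for `(A,u) ∈ L`, induced on `𝐛(L)`. It is the anchor action factored
through `L ⧸ ker 𝐛 ≃ 𝐛(L)`, so that bilinearity requires no choice of `A`. -/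
noncomputable def inducedBracket : base L →ₗ[R] base L →ₗ[R] base L :=
  (LinearMap.ker (proj L)).liftQ hL.action hL.ker_proj_le_ker_action ∘ₗ
    ((proj L).quotKerEquivOfSurjective (proj_surjective L)).symm.toLinearMap

theorem inducedBracket_proj (X : L) : hL.inducedBracket (proj L X) = hL.action X := by
  have hX : ((proj L).quotKerEquivOfSurjective (proj_surjective L)).symm (proj L X) =
      Submodule.Quotient.mk X :=
    (LinearEquiv.symm_apply_eq _).mpr rfl
  simp only [inducedBracket, LinearMap.comp_apply, LinearEquiv.coe_coe, hX, Submodule.liftQ_apply]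

theorem inducedBracket_apply_of_mem {A : Module.End R M} {u : base L} (hA : (A, (u : M)) ∈ L)
    (v : base L) : (hL.inducedBracket u v : M) = A v :=
  congrArg (fun f : Module.End R (base L) => (f v : M)) (hL.inducedBracket_proj ⟨(A, u), hA⟩)

theorem inducedBracket_proj_proj (X Y : L) :
    hL.inducedBracket (proj L X) (proj L Y) =
      proj L ⟨bracket X.1 Y.1, hL.bracket_mem X.2 Y.2⟩ := by
  rw [inducedBracket_proj]
  rfl

theorem inducedBracket_isAlt : hL.inducedBracket.IsAlt := by
  intro u
  obtain ⟨X, rfl⟩ := proj_surjective L u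
  rw [inducedBracket_proj]
  exact Subtype.ext (hL.apply_self X.2)

theorem inducedBracket_leibniz (u v w : base L) :
    hL.inducedBracket u (hL.inducedBracket v w) =
      hL.inducedBracket (hL.inducedBracket u v) w +
        hL.inducedBracket v (hL.inducedBracket u w) := by
  obtain ⟨X, rfl⟩ := proj_surjective L u
  obtain ⟨Y, rfl⟩ := proj_surjective L v
  obtain ⟨Z, rfl⟩ := proj_surjective L w
  simp only [inducedBracket_proj_proj, ← map_add]
  exact congrArg (proj L) (Subtype.ext (bracket_leibniz X.1 Y.1 Z.1))

theorem inducedBracket_jacobi (u v w : base L) :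
    hL.inducedBracket u (hL.inducedBracket v w) + hL.inducedBracket v (hL.inducedBracket w u) +
      hL.inducedBracket w (hL.inducedBracket u v) = 0 := by
  rw [hL.inducedBracket_leibniz u v w, ← hL.inducedBracket_isAlt.neg u w,
    ← hL.inducedBracket_isAlt.neg (hL.inducedBracket u v) w, map_neg]
  abel

theorem eq_inducedBracket {br : base L →ₗ[R] base L →ₗ[R] M}
    (hbr : ∀ (A : Module.End R M) (u v : base L), (A, (u : M)) ∈ L → br u v = A v)
    (u v : base L) : br u v = (hL.inducedBracket u v : M) := by
  obtain ⟨X, rfl⟩ := proj_surjective L u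
  exact (hbr X.1.1 _ v X.2).trans (hL.inducedBracket_apply_of_mem X.2 v).symm

end IsIsotropicSubalgebra

theorem isIsotropicSubalgebra_of_subset_perpSet {E : Type*} [AddCommGroup E] [Module ℝ E]
    {L : Submodule ℝ ((E →ₗ[ℝ] E) × E)} (hperp : (L : Set ((E →ₗ[ℝ] E) × E)) ⊆ perpSet L)
    (hclosed : ∀ X ∈ L, ∀ Y ∈ L, obr X Y ∈ L) : IsIsotropicSubalgebra L where
  apply_self X hX := by
    have hXX : (1 / 2 : ℝ) • (X.1 X.2 + X.1 X.2) = 0 := hperp hX X hX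
    rwa [← two_smul ℝ, smul_smul, one_div_mul_cancel two_ne_zero, one_smul] at hXX
  bracket_mem X hX Y hY := hclosed X hX Y hY

end OmniLie

open OmniLie in
theorem dirac_induces_lie_algebra_general {R M : Type*} [CommRing R] [AddCommGroup M] [Module R M]
    {L : Submodule R (Module.End R M × M)} (hL : IsIsotropicSubalgebra L) :
    ∃ br : base L →ₗ[R] base L →ₗ[R] base L,
      (∀ (A : Module.End R M) (u v : base L), (A, (u : M)) ∈ L → (br u v : M) = A v) ∧
      (∀ br' : base L →ₗ[R] base L →ₗ[R] M,
        (∀ (A : Module.End R M) (u v : base L), (A, (u : M)) ∈ L → br' u v = A v) →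
          ∀ u v : base L, br' u v = (br u v : M)) ∧
      br.IsAlt ∧
      (∀ u v w : base L, br u (br v w) + br v (br w u) + br w (br u v) = 0) :=
  ⟨hL.inducedBracket, fun _ _ v hA => hL.inducedBracket_apply_of_mem hA v,
    fun _ => hL.eq_inducedBracket, hL.inducedBracket_isAlt, hL.inducedBracket_jacobi⟩

/-- A Dirac structure `L ⊆ ℰ` induces, on `W = 𝐛(L)`, a unique bilinear bracket with
`[u,v] = A(v)` whenever `(A,u) ∈ L` and `v ∈ W`; this bracket takes values in `W`,
is antisymmetric and satisfies the Jacobi identity, i.e. `(W,[·,·])` is a Lie algebra. -/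
theorem dirac_induces_lie_algebra (L : Submodule ℝ ((V →ₗ[ℝ] V) × V))
    (hL : (L : Set ((V →ₗ[ℝ] V) × V)) = perpSet (L : Set ((V →ₗ[ℝ] V) × V)))
    (hclosed : ∀ X ∈ L, ∀ Y ∈ L, obr X Y ∈ L)
    (W : Submodule ℝ V) (hW : W = L.map (LinearMap.snd ℝ (V →ₗ[ℝ] V) V)) :
    ∃ br : W →ₗ[ℝ] W →ₗ[ℝ] W,
      (∀ (A : V →ₗ[ℝ] V) (u v : W), (A, (u : V)) ∈ L → (br u v : V) = A v) ∧
      (∀ br' : W →ₗ[ℝ] W →ₗ[ℝ] V,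
        (∀ (A : V →ₗ[ℝ] V) (u v : W), (A, (u : V)) ∈ L → br' u v = A v) →
          ∀ u v : W, br' u v = (br u v : V)) ∧
      (∀ u v : W, br u v = - br v u) ∧
      (∀ u v w : W, br u (br v w) + br v (br w u) + br w (br u v) = 0) := by
  subst hW
  obtain ⟨br, hbr, huniq, halt, hjacobi⟩ := dirac_induces_lie_algebra_general
    (OmniLie.isIsotropicSubalgebra_of_subset_perpSet hL.subset hclosed)
  exact ⟨br, hbr, huniq, fun u v => (halt.neg v u).symm, hjacobi⟩
end

section
/- Let W ⊆ V be a subspace equipped with a Lie bracket [·,·]. Then the lifted subspace L_W = {(A,u) ∈ ℰ : u ∈ W and A(w) = [u,w] for all w ∈ W} satisfies L_W = L_W^⊥, is closed under the bracket ⦃·,·⦄ (hence is a Dirac structure), 𝐛(L_W) = W, and the induced bracket on W is the given one: A(v) = [u,v] for all (A,u) ∈ L_W and v ∈ W. -/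
variable {V : Type*} [AddCommGroup V] [Module ℝ V] [FiniteDimensional ℝ V]

/-- The lifted Dirac structure `L_W = {(A,u) ∈ ℰ : u ∈ W and A(w) = [u,w] for all w ∈ W}`
of a subspace `W ⊆ V` equipped with a bilinear bracket `br`. -/
def liftSet (W : Submodule ℝ V) (br : W →ₗ[ℝ] W →ₗ[ℝ] W) :
    Set ((V →ₗ[ℝ] V) × V) :=
  {X | ∃ hu : X.2 ∈ W, ∀ w : W, X.1 w = (br ⟨X.2, hu⟩ w : V)}

/-!
Skew or not, a bilinear map `br` on `W` satisfies `L_W^⊥ = L_W'`, where `L_W'` is the lift of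
`-br.flip`; skew-symmetry says exactly that `-br.flip = br`. Indeed, the endomorphisms vanishing
on `W` lie in `L_W` over `0`, and pairing with one whose kernel is `W` forces the vector part of an
element of `L_W^⊥` into `W`. Since every `br w` extends to an endomorphism, `L_W` has an element
over each `w ∈ W`, and pairing with it gives the value at `w` of the endomorphism part. Closure
under the bracket is the Jacobi identity in the form saying that `u ↦ br u` turns brackets into
commutators.
-/

theorem exists_end_ker_eq {K E : Type*} [DivisionRing K] [AddCommGroup E] [Module K E]
    (W : Submodule K E) : ∃ P : E →ₗ[K] E, P.ker = W := by
  obtain ⟨C, hC⟩ := W.exists_isCompl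
  exact ⟨C.projection W hC.symm, Submodule.ker_projection hC.symm⟩

theorem leibniz_of_skew_of_jacobi {R M : Type*} [CommSemiring R] [AddCommGroup M] [Module R M]
    {br : M →ₗ[R] M →ₗ[R] M} (hskew : ∀ v w, br v w = -br w v)
    (hjacobi : ∀ u v w, br u (br v w) + br v (br w u) + br w (br u v) = 0) (u v w : M) :
    br (br u v) w = br u (br v w) - br v (br u w) := by
  have h := hjacobi u v w
  rw [hskew w u, hskew w (br u v), map_neg, ← sub_eq_add_neg, ← sub_eq_add_neg] at h
  exact (sub_eq_zero.mp h).symm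

section Lift

variable {E : Type*} [AddCommGroup E] [Module ℝ E]

theorem opair_eq_zero_iff {X Y : (E →ₗ[ℝ] E) × E} : opair X Y = 0 ↔ X.1 Y.2 = -Y.1 X.2 := by
  simp only [opair, smul_eq_zero_iff_right (one_div_ne_zero (two_ne_zero' ℝ)),
    add_eq_zero_iff_eq_neg]

variable {W : Submodule ℝ E} {br : W →ₗ[ℝ] W →ₗ[ℝ] W}

theorem mk_coe_mem_liftSet_iff {A : E →ₗ[ℝ] E} {u : W} :
    (A, (u : E)) ∈ liftSet W br ↔ ∀ w : W, A w = br u w :=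
  ⟨fun ⟨_, hA⟩ ↦ hA, fun hA ↦ ⟨u.2, hA⟩⟩

variable (br) in
theorem exists_mk_coe_mem_liftSet (u : W) : ∃ A : E →ₗ[ℝ] E, (A, (u : E)) ∈ liftSet W br := by
  obtain ⟨A, hA⟩ := LinearMap.exists_extend (W.subtype ∘ₗ br u)
  exact ⟨A, mk_coe_mem_liftSet_iff.mpr (LinearMap.congr_fun hA)⟩

variable (W br) in
theorem snd_image_liftSet : Prod.snd '' liftSet W br = (W : Set E) := by
  ext u
  constructor
  · rintro ⟨_, ⟨hu, -⟩, rfl⟩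
    exact hu
  · intro hu
    obtain ⟨A, hA⟩ := exists_mk_coe_mem_liftSet br ⟨u, hu⟩
    exact ⟨(A, u), hA, rfl⟩

theorem mk_zero_mem_liftSet {A : E →ₗ[ℝ] E} (hA : W ≤ A.ker) : (A, 0) ∈ liftSet W br := by
  refine mk_coe_mem_liftSet_iff (u := 0) |>.mpr fun w ↦ ?_
  rw [map_zero, LinearMap.zero_apply, ZeroMemClass.coe_zero]
  exact hA w.2

theorem snd_mem_of_mem_perpSet_liftSet {X : (E →ₗ[ℝ] E) × E} (hX : X ∈ perpSet (liftSet W br)) :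
    X.2 ∈ W := by
  obtain ⟨P, hP⟩ := exists_end_ker_eq W
  have hpair : X.1 0 = -P X.2 := opair_eq_zero_iff.mp (hX (P, 0) (mk_zero_mem_liftSet hP.ge))
  rw [map_zero, zero_eq_neg] at hpair
  rwa [← hP, LinearMap.mem_ker]

variable (W br) in
theorem perpSet_liftSet : perpSet (liftSet W br) = liftSet W (-br.flip) := by
  ext ⟨A, u⟩
  constructor
  · intro hX
    lift u to W using snd_mem_of_mem_perpSet_liftSet hX
    refine mk_coe_mem_liftSet_iff.mpr fun w ↦ ?_
    obtain ⟨B, hB⟩ := exists_mk_coe_mem_liftSet br w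
    calc A w = -B u := opair_eq_zero_iff.mp (hX _ hB)
      _ = -(br w u : E) := by rw [mk_coe_mem_liftSet_iff.mp hB]
  · rintro ⟨hu, hA⟩ ⟨B, v⟩ ⟨hv, hB⟩
    refine opair_eq_zero_iff.mpr ?_
    calc A v = -(br ⟨v, hv⟩ ⟨u, hu⟩ : E) := hA ⟨v, hv⟩
      _ = -B u := by rw [← hB ⟨u, hu⟩]

theorem obr_mem_liftSet (hleibniz : ∀ u v w, br (br u v) w = br u (br v w) - br v (br u w))
    {X Y : (E →ₗ[ℝ] E) × E} (hX : X ∈ liftSet W br) (hY : Y ∈ liftSet W br) :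
    obr X Y ∈ liftSet W br := by
  obtain ⟨A, u⟩ := X
  obtain ⟨B, v⟩ := Y
  lift u to W using hX.1
  lift v to W using hY.1
  rw [mk_coe_mem_liftSet_iff] at hX hY
  have hvec : obr (A, (u : E)) (B, v) = (A ∘ₗ B - B ∘ₗ A, (br u v : E)) :=
    Prod.ext rfl (hX v)
  rw [hvec, mk_coe_mem_liftSet_iff]
  intro w
  calc A (B w) - B (A w) = br u (br v w) - br v (br u w) := by rw [hY, hX, hX, hY]
    _ = br (br u v) w := by rw [hleibniz, Submodule.coe_sub]

end Lift

theorem lift_is_dirac_general {E : Type*} [AddCommGroup E] [Module ℝ E] (W : Submodule ℝ E)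
    (br : W →ₗ[ℝ] W →ₗ[ℝ] W) (hskew : ∀ v w : W, br v w = -br w v)
    (hjacobi : ∀ u v w : W, br u (br v w) + br v (br w u) + br w (br u v) = 0) :
    liftSet W br = perpSet (liftSet W br) ∧
    (∀ X ∈ liftSet W br, ∀ Y ∈ liftSet W br, obr X Y ∈ liftSet W br) ∧
    Prod.snd '' liftSet W br = (W : Set E) ∧
    (∀ (A : E →ₗ[ℝ] E) (u : W), (A, (u : E)) ∈ liftSet W br →
      ∀ v : W, A v = (br u v : E)) := by
  have hflip : -br.flip = br := LinearMap.ext₂ fun v w ↦ (hskew v w).symm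
  have hleibniz := leibniz_of_skew_of_jacobi hskew hjacobi
  refine ⟨?_, fun X hX Y hY ↦ obr_mem_liftSet hleibniz hX hY, snd_image_liftSet W br,
    fun A u hA ↦ mk_coe_mem_liftSet_iff.mp hA⟩
  rw [perpSet_liftSet, hflip]

/-- For a subspace `W ⊆ V` with a Lie bracket, the lifted subspace `L_W` satisfies
`L_W = L_W^⊥`, is closed under the bracket (hence is a Dirac structure), projects onto
`W`, and induces the given bracket on `W`. -/
theorem lift_is_dirac (W : Submodule ℝ V) (br : W →ₗ[ℝ] W →ₗ[ℝ] W)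
    (hskew : ∀ v w : W, br v w = - br w v)
    (hjacobi : ∀ u v w : W, br u (br v w) + br v (br w u) + br w (br u v) = 0) :
    liftSet W br = perpSet (liftSet W br) ∧
    (∀ X ∈ liftSet W br, ∀ Y ∈ liftSet W br, obr X Y ∈ liftSet W br) ∧
    Prod.snd '' liftSet W br = (W : Set V) ∧
    (∀ (A : V →ₗ[ℝ] V) (u : W), (A, (u : V)) ∈ liftSet W br →
      ∀ v : W, A v = (br u v : V)) :=
  lift_is_dirac_general W br hskew hjacobi
end

section
/- Let W ⊆ V be a subspace equipped with a Lie bracket [·,·], and let L ⊆ ℰ be a Dirac structure such that 𝐛(L) = W and A(v) = [u,v] for every (A,u) ∈ L and v ∈ W. Then L equals the lifted Dirac structure: L = L_W. In particular, a Dirac structure is uniquely determined by the Lie algebra it induces on its projection to V. -/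
variable {V : Type*} [AddCommGroup V] [Module ℝ V] [FiniteDimensional ℝ V]

/-!
Whether `(A, u)` lies in `L^⊥` depends on `A` only through its restriction to `𝐛(L) = W`. Every
`u ∈ W` lifts to some `(A', u) ∈ L`, and if `(A, u) ∈ L_W`, then `A` and `A'` both restrict to
`[u, ·]` on `W`. Hence `L_W ⊆ L^⊥ = L`.
-/

section SelfOrthogonal

omit [FiniteDimensional ℝ V]

lemma mem_perpSet_of_eqOn {S : Set ((V →ₗ[ℝ] V) × V)} {A A' : V →ₗ[ℝ] V} {u : V}
    (h : Set.EqOn A A' (Prod.snd '' S)) (hA' : (A', u) ∈ perpSet S) : (A, u) ∈ perpSet S := by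
  intro l hl
  calc
    opair (A, u) l = opair (A', u) l := by
      simp only [opair, h (Set.mem_image_of_mem Prod.snd hl)]
    _ = 0 := hA' l hl

lemma subset_liftSet {W : Submodule ℝ V} {br : W →ₗ[ℝ] W →ₗ[ℝ] W}
    {S : Set ((V →ₗ[ℝ] V) × V)} (hproj : Prod.snd '' S ⊆ (W : Set V))
    (hbr : ∀ (A : V →ₗ[ℝ] V) (u : W), (A, (u : V)) ∈ S → ∀ v : W, A v = (br u v : V)) :
    S ⊆ liftSet W br := by
  rintro ⟨A, u⟩ hX
  have hu : u ∈ W := hproj (Set.mem_image_of_mem Prod.snd hX)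
  exact ⟨hu, hbr A ⟨u, hu⟩ hX⟩

lemma eqOn_of_mem_liftSet {W : Submodule ℝ V} {br : W →ₗ[ℝ] W →ₗ[ℝ] W}
    {A A' : V →ₗ[ℝ] V} {u : V} (hA : (A, u) ∈ liftSet W br) (hA' : (A', u) ∈ liftSet W br) :
    Set.EqOn A A' W := by
  obtain ⟨_, hA⟩ := hA
  obtain ⟨_, hA'⟩ := hA'
  exact fun w hw ↦ (hA ⟨w, hw⟩).trans (hA' ⟨w, hw⟩).symm

theorem dirac_unique_lift_general (W : Submodule ℝ V) (br : W →ₗ[ℝ] W →ₗ[ℝ] W)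
    (L : Set ((V →ₗ[ℝ] V) × V)) (hL : L = perpSet L) (hproj : Prod.snd '' L = (W : Set V))
    (hbr : ∀ (A : V →ₗ[ℝ] V) (u : W), (A, (u : V)) ∈ L → ∀ v : W, A v = (br u v : V)) :
    L = liftSet W br := by
  have hsub : L ⊆ liftSet W br := subset_liftSet hproj.subset hbr
  refine hsub.antisymm ?_
  rintro ⟨A, u⟩ hA
  have hu : u ∈ Prod.snd '' L := hproj ▸ hA.1
  obtain ⟨⟨A', _⟩, hA', rfl⟩ := hu
  have hAA' : Set.EqOn A A' (Prod.snd '' L) := hproj ▸ eqOn_of_mem_liftSet hA (hsub hA')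
  exact hL.superset (mem_perpSet_of_eqOn hAA' (hL.subset hA'))

end SelfOrthogonal

/-- A Dirac structure `L` with `𝐛(L) = W` inducing the bracket of `(W,[·,·])`
coincides with the lifted Dirac structure `L_W`: Dirac structures are uniquely
determined by the Lie algebras they induce on their projections. -/
theorem dirac_unique_lift (W : Submodule ℝ V) (br : W →ₗ[ℝ] W →ₗ[ℝ] W)
    (hskew : ∀ v w : W, br v w = - br w v)
    (hjacobi : ∀ u v w : W, br u (br v w) + br v (br w u) + br w (br u v) = 0)
    (L : Submodule ℝ ((V →ₗ[ℝ] V) × V))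
    (hL : (L : Set ((V →ₗ[ℝ] V) × V)) = perpSet (L : Set ((V →ₗ[ℝ] V) × V)))
    (hclosed : ∀ X ∈ L, ∀ Y ∈ L, obr X Y ∈ L)
    (hproj : L.map (LinearMap.snd ℝ (V →ₗ[ℝ] V) V) = W)
    (hbr : ∀ (A : V →ₗ[ℝ] V) (u : W), (A, (u : V)) ∈ L → ∀ v : W, A v = (br u v : V)) :
    (L : Set ((V →ₗ[ℝ] V) × V)) = liftSet W br :=
  dirac_unique_lift_general W br L hL (congrArg SetLike.coe hproj) hbr
end

section
/- Let W ⊆ V be a subspace with a Lie bracket [·,·] and L_W its lifted Dirac structure. If (A,u) ∈ ℰ belongs to the normalizer N_{L_W}, then A(W) ⊆ W and the restriction of A to W is a derivation of the Lie algebra (W,[·,·]): A[v,w] = [A(v),w] + [v,A(w)] for all v, w ∈ W. -/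
variable {V : Type*} [AddCommGroup V] [Module ℝ V] [FiniteDimensional ℝ V]

/-!
Every left multiplication `[v, ·]` on `W` extends to some endomorphism `B` of `V`, so `(B, v)` lies
in `L_W`. That `⦃(A, u), (B, v)⦄` lies in `L_W` says `A v ∈ W` and `A B w - B A w = [A v, w]` for
`w ∈ W`; since `w` and `A w` lie in `W`, the left side is `A [v, w] - [v, A w]`.
-/

section

variable {K E : Type*} [DivisionRing K] [AddCommGroup E] [Module K E] {W : Submodule K E}

theorem exists_end_extending (f : Module.End K W) :
    ∃ B : Module.End K E, ∀ w : W, B w = f w := by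
  obtain ⟨B, hB⟩ := (W.subtype ∘ₗ f).exists_extend
  exact ⟨B, LinearMap.congr_fun hB⟩

end

section

variable {R M : Type*} [Ring R] [AddCommGroup M] [Module R M] {W : Submodule R M}

theorem leibniz_of_lie_extends {br : W → W → W} {A B : Module.End R M} {δ : W → W} {v : W}
    (hδ : ∀ w, (δ w : M) = A w) (hB : ∀ w : W, B w = br v w)
    (hAB : ∀ w : W, ⁅A, B⁆ w = br (δ v) w) (w : W) :
    δ (br v w) = br (δ v) w + br v (δ w) := by
  apply Subtype.ext
  calc (δ (br v w) : M) = A (B w) := by rw [hδ, hB]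
    _ = ⁅A, B⁆ w + B (A w) := by simp [Ring.lie_def]
    _ = br (δ v) w + br v (δ w) := by rw [hAB, ← hδ, hB]

end

/-- Here `hnorm` spells out that `(A, u)` normalizes the lifted Dirac structure of `br`: the
bracket of `(A, u)` with `(B, v)` is `(⁅A, B⁆, A v)`, whatever `u` is. -/
theorem normalizer_gives_derivation_general {K E : Type*} [DivisionRing K] [AddCommGroup E]
    [Module K E] (W : Submodule K E) (br : W → Module.End K W) (A : Module.End K E)
    (hnorm : ∀ (v : W) (B : Module.End K E), (∀ w : W, B w = br v w) →
      ∃ hv : A v ∈ W, ∀ w : W, ⁅A, B⁆ w = br ⟨A v, hv⟩ w) :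
    ∃ δ : Module.End K W,
      (∀ w : W, (δ w : E) = A w) ∧
      (∀ v w : W, δ (br v w) = br (δ v) w + br v (δ w)) := by
  have hA : ∀ v ∈ W, A v ∈ W := by
    intro v hv
    obtain ⟨B, hB⟩ := exists_end_extending (br ⟨v, hv⟩)
    exact (hnorm ⟨v, hv⟩ B hB).1
  refine ⟨A.restrict hA, fun _ ↦ rfl, fun v ↦ ?_⟩
  obtain ⟨B, hB⟩ := exists_end_extending (br v)
  obtain ⟨_, hAB⟩ := hnorm v B hB
  exact leibniz_of_lie_extends (br := fun v w ↦ br v w) (fun _ ↦ rfl) hB hAB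

/-- If `(A,u)` is in the normalizer of the lifted Dirac structure `L_W`, then
`A(W) ⊆ W` and `A` restricts to a derivation of the Lie algebra `(W,[·,·])`. -/
theorem normalizer_gives_derivation (W : Submodule ℝ V) (br : W →ₗ[ℝ] W →ₗ[ℝ] W)
    (hskew : ∀ v w : W, br v w = - br w v)
    (hjacobi : ∀ u v w : W, br u (br v w) + br v (br w u) + br w (br u v) = 0)
    (A : V →ₗ[ℝ] V) (u : V)
    (hnorm : ∀ l ∈ liftSet W br, obr (A, u) l ∈ liftSet W br) :
    ∃ δ : W →ₗ[ℝ] W,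
      (∀ w : W, (δ w : V) = A w) ∧
      (∀ v w : W, δ (br v w) = br (δ v) w + br v (δ w)) :=
  normalizer_gives_derivation_general W br A fun v B hB ↦ hnorm (B, v) ⟨v.2, hB⟩
end

section
/- Let W ⊆ V be a subspace with a Lie bracket [·,·] and L_W its lifted Dirac structure. If δ : W → W is a derivation of (W,[·,·]) (δ[v,w] = [δ(v),w] + [v,δ(w)] for all v,w ∈ W), then for every A ∈ End(V) extending δ (i.e. A(w) = δ(w) for all w ∈ W) and every u ∈ V, the element (A,u) lies in the normalizer N_{L_W}. -/
variable {V : Type*} [AddCommGroup V] [Module ℝ V] [FiniteDimensional ℝ V]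

section Commutator

variable {R M : Type*} [AddCommGroup M]

theorem comp_sub_comp_apply_of_extends [Ring R] [Module R M] {W : Submodule R M}
    {A B : M →ₗ[R] M} {a b : W →ₗ[R] W} (hA : ∀ w : W, A w = (a w : M))
    (hB : ∀ w : W, B w = (b w : M)) (w : W) :
    (A ∘ₗ B - B ∘ₗ A) w = ((a ∘ₗ b - b ∘ₗ a) w : M) := by
  simp only [LinearMap.sub_apply, LinearMap.comp_apply, hA, hB, Submodule.coe_sub]

theorem comp_sub_comp_eq_of_leibniz [CommSemiring R] [Module R M] {br : M →ₗ[R] M →ₗ[R] M}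
    {δ : M →ₗ[R] M} (hδ : ∀ v w, δ (br v w) = br (δ v) w + br v (δ w)) (v : M) :
    δ ∘ₗ br v - br v ∘ₗ δ = br (δ v) :=
  LinearMap.ext fun w => sub_eq_of_eq_add (hδ v w)

end Commutator

section LiftSet

variable {E : Type*} [AddCommGroup E] [Module ℝ E] {W : Submodule ℝ E} {br : W →ₗ[ℝ] W →ₗ[ℝ] W}

theorem mem_liftSet_iff_exists {X : (E →ₗ[ℝ] E) × E} :
    X ∈ liftSet W br ↔ ∃ v : W, (v : E) = X.2 ∧ ∀ w : W, X.1 w = (br v w : E) := by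
  constructor
  · rintro ⟨hX, hbr⟩
    exact ⟨⟨X.2, hX⟩, rfl, hbr⟩
  · obtain ⟨B, x⟩ := X
    rintro ⟨v, rfl, hbr⟩
    exact ⟨v.2, hbr⟩

theorem derivation_lifts_to_normalizer_general {δ : W →ₗ[ℝ] W}
    (hder : ∀ v w : W, δ (br v w) = br (δ v) w + br v (δ w))
    {A : E →ₗ[ℝ] E} (hA : ∀ w : W, A w = (δ w : E)) (u : E) :
    ∀ l ∈ liftSet W br, obr (A, u) l ∈ liftSet W br := by
  rintro ⟨B, x⟩ hl
  obtain ⟨v, rfl, hB⟩ := mem_liftSet_iff_exists.mp hl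
  refine mem_liftSet_iff_exists.mpr ⟨δ v, (hA v).symm, fun w => ?_⟩
  calc (A ∘ₗ B - B ∘ₗ A) w
      = ((δ ∘ₗ br v - br v ∘ₗ δ) w : E) := comp_sub_comp_apply_of_extends hA hB w
    _ = (br (δ v) w : E) := by rw [comp_sub_comp_eq_of_leibniz hder]

end LiftSet

/-- Every derivation `δ` of `(W,[·,·])` lifts to the normalizer of `L_W`: any
`A ∈ End(V)` extending `δ`, together with any `u ∈ V`, gives `(A,u) ∈ N_{L_W}`. -/
theorem derivation_lifts_to_normalizer (W : Submodule ℝ V) (br : W →ₗ[ℝ] W →ₗ[ℝ] W)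
    (hskew : ∀ v w : W, br v w = - br w v)
    (hjacobi : ∀ u v w : W, br u (br v w) + br v (br w u) + br w (br u v) = 0)
    (δ : W →ₗ[ℝ] W)
    (hder : ∀ v w : W, δ (br v w) = br (δ v) w + br v (δ w))
    (A : V →ₗ[ℝ] V) (hA : ∀ w : W, A w = (δ w : V)) (u : V) :
    ∀ l ∈ liftSet W br, obr (A, u) l ∈ liftSet W br :=
  derivation_lifts_to_normalizer_general hder hA u
end

section
/- Let L ⊆ ℰ be a Dirac structure and X ∈ ℰ. Then X belongs to the normalizer N_L if and only if the 1-cochain ω_X(l) = ⟨X,l⟩ is closed, i.e. if and only if ρ(l₁)(⟨X,l₂⟩) − ρ(l₂)(⟨X,l₁⟩) − ⟨X,⦃l₁,l₂⦄⟩ = 0 for all l₁, l₂ ∈ L. -/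
variable {V : Type*} [AddCommGroup V] [Module ℝ V] [FiniteDimensional ℝ V]

/-!
The pairing is invariant under the bracket, `ρ(X)⟨Y,Z⟩ = ⟨⦃X,Y⦄,Z⟩ + ⟨Y,⦃X,Z⦄⟩`, and the symmetric
part of the bracket is `⦃X,Y⦄ + ⦃Y,X⦄ = (0, 2⟨X,Y⟩)`. Together they give
`dω_X(l₁,l₂) = -⟨⦃X,l₁⦄,l₂⟩`, so `ω_X` is closed on `L` exactly when `⦃X,L⦄ ⊆ L^⊥ = L`.
-/

section OmniLie

variable {W : Type*} [AddCommGroup W] [Module ℝ W]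

theorem opair_add_left (X Y Z : (W →ₗ[ℝ] W) × W) :
    opair (X + Y) Z = opair X Z + opair Y Z := by
  simp only [opair, Prod.fst_add, Prod.snd_add, LinearMap.add_apply, map_add]
  module

theorem anchor_opair (X Y Z : (W →ₗ[ℝ] W) × W) :
    X.1 (opair Y Z) = opair (obr X Y) Z + opair Y (obr X Z) := by
  simp only [opair, obr, map_smul, map_add, LinearMap.sub_apply, LinearMap.comp_apply]
  module

theorem obr_add_obr_swap (X Y : (W →ₗ[ℝ] W) × W) :
    obr X Y + obr Y X = (0, (2 : ℝ) • opair X Y) := by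
  ext1
  · simp only [obr, Prod.fst_add, sub_add_sub_cancel, sub_self]
  · simp only [obr, opair, Prod.snd_add]
    module

theorem opair_zero_mk (w : W) (Z : (W →ₗ[ℝ] W) × W) :
    opair (0, w) Z = (1/2 : ℝ) • Z.1 w := by
  simp only [opair, LinearMap.zero_apply, zero_add]

/-- The differential `dω(l₁,l₂) = ρ(l₁)(ω(l₂)) − ρ(l₂)(ω(l₁)) − ω(⦃l₁,l₂⦄)` of a `W`-valued
1-cochain `ω`, encoded as a function on all of `End(W) × W`; a cochain on `L` is closed when this
vanishes on `L × L`. Linearity of `ω` is not part of the encoding. -/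
def cochainDifferential (ω : (W →ₗ[ℝ] W) × W → W) (l₁ l₂ : (W →ₗ[ℝ] W) × W) : W :=
  l₁.1 (ω l₂) - l₂.1 (ω l₁) - ω (obr l₁ l₂)

theorem cochainDifferential_opair (X l₁ l₂ : (W →ₗ[ℝ] W) × W) :
    cochainDifferential (opair X) l₁ l₂ = -opair (obr X l₁) l₂ := by
  have symmetric_part : opair (obr X l₁) l₂ + opair (obr l₁ X) l₂ = l₂.1 (opair X l₁) := by
    rw [← opair_add_left, obr_add_obr_swap, opair_zero_mk, map_smul]
    module
  rw [cochainDifferential, anchor_opair l₁ X l₂, ← symmetric_part]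
  abel

theorem obr_mem_perpSet_iff (S : Set ((W →ₗ[ℝ] W) × W)) (X l : (W →ₗ[ℝ] W) × W) :
    obr X l ∈ perpSet S ↔ ∀ l' ∈ S, cochainDifferential (opair X) l l' = 0 := by
  simp only [perpSet, Set.mem_ofPred_eq, cochainDifferential_opair, neg_eq_zero]

theorem normalizer_iff_closed_cochain_general (L : Set ((W →ₗ[ℝ] W) × W)) (hL : L = perpSet L)
    (X : (W →ₗ[ℝ] W) × W) :
    (∀ l ∈ L, obr X l ∈ L) ↔
      (∀ l₁ ∈ L, ∀ l₂ ∈ L,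
        l₁.1 (opair X l₂) - l₂.1 (opair X l₁) - opair X (obr l₁ l₂) = 0) :=
  forall₂_congr fun l _ => (Set.ext_iff.mp hL (obr X l)).trans (obr_mem_perpSet_iff L X l)

end OmniLie

/-- For a Dirac structure `L` and `X ∈ ℰ`: `X ∈ N_L` if and only if the 1-cochain
`ω_X(l) = ⟨X,l⟩` is closed, i.e.
`ρ(l₁)(⟨X,l₂⟩) − ρ(l₂)(⟨X,l₁⟩) − ⟨X,⦃l₁,l₂⦄⟩ = 0` for all `l₁, l₂ ∈ L`. -/
theorem normalizer_iff_closed_cochain (L : Submodule ℝ ((V →ₗ[ℝ] V) × V))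
    (hL : (L : Set ((V →ₗ[ℝ] V) × V)) = perpSet (L : Set ((V →ₗ[ℝ] V) × V)))
    (hclosed : ∀ X ∈ L, ∀ Y ∈ L, obr X Y ∈ L)
    (X : (V →ₗ[ℝ] V) × V) :
    (∀ l ∈ L, obr X l ∈ L) ↔
      (∀ l₁ ∈ L, ∀ l₂ ∈ L,
        l₁.1 (opair X l₂) - l₂.1 (opair X l₁) - opair X (obr l₁ l₂) = 0) :=
  normalizer_iff_closed_cochain_general (L : Set ((V →ₗ[ℝ] V) × V)) hL X
end

section
/- Let W ⊆ V be a subspace with a Lie bracket [·,·] and L_W its lifted Dirac structure, let Ω : W × W → W be a bilinear antisymmetric map, and let X = (A,u) ∈ ℰ. Suppose Ω(𝐛(l₁), 𝐛(l₂)) = −⟨⦃X,l₁⦄, l₂⟩ for all l₁, l₂ ∈ L_W. Then A(W) ⊆ W and Ω(a,b) = (1/2)·([A(a),b] + [a,A(b)] − A([a,b])) for all a, b ∈ W. -/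
variable {V : Type*} [AddCommGroup V] [Module ℝ V] [FiniteDimensional ℝ V]

/-!
The fibre of `𝐛 : L_W → W` over `v` consists of all the extensions to `V` of `[v, ·] : W → W`; over
`0` these are the endomorphisms killing `W`. The pairing `⟨⦃X, l₁⦄, l₂⟩` is assumed to depend only
on `𝐛(l₁)` and `𝐛(l₂)`. If `B` kills `W`, then `(B, 0)` and `(0, 0)` lie in the same fibre, and
comparing them, with `l₂` over `w ∈ W`, gives `B(A(w)) = 0`; as this holds for every such `B`,
`A(w) ∈ W`. Once `A` preserves `W`, every endomorphism from `L_W` in `⟨⦃X, l₁⦄, l₂⟩` is evaluated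
on `W`, where it is given by the bracket.
-/

theorem mem_iff_forall_end_apply_eq_zero {K E : Type*} [DivisionRing K] [AddCommGroup E]
    [Module K E] {p : Submodule K E} {x : E} :
    x ∈ p ↔ ∀ f : E →ₗ[K] E, p ≤ f.ker → f x = 0 := by
  refine ⟨fun hx _ hf => hf hx, fun h => ?_⟩
  obtain ⟨q, hpq⟩ := p.exists_isCompl
  have hker : (q.projection p hpq.symm).ker = p := Submodule.ker_projection hpq.symm
  rw [← hker]
  exact h _ hker.ge

section LiftedDirac

omit [FiniteDimensional ℝ V]

theorem opair_obr (A B C : V →ₗ[ℝ] V) (u v w : V) :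
    opair (obr (A, u) (B, v)) (C, w) = (1 / 2 : ℝ) • (A (B w) - B (A w) + C (A v)) :=
  rfl

variable {W : Submodule ℝ V} {br : W →ₗ[ℝ] W →ₗ[ℝ] W}

theorem mk_mem_liftSet {B : V →ₗ[ℝ] V} {v : W} :
    (B, (v : V)) ∈ liftSet W br ↔ ∀ w : W, B w = br v w :=
  exists_prop_of_true v.2

theorem mk_zero_mem_liftSet_s19 {B : V →ₗ[ℝ] V} : (B, (0 : V)) ∈ liftSet W br ↔ W ≤ B.ker := by
  have hfibre := mk_mem_liftSet (br := br) (B := B) (v := 0)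
  simp only [map_zero, LinearMap.zero_apply, ZeroMemClass.coe_zero] at hfibre
  exact hfibre.trans Subtype.forall

theorem exists_mk_mem_liftSet (br : W →ₗ[ℝ] W →ₗ[ℝ] W) (v : W) :
    ∃ B : V →ₗ[ℝ] V, (B, (v : V)) ∈ liftSet W br := by
  obtain ⟨B, hB⟩ := (W.subtype ∘ₗ br v).exists_extend
  exact ⟨B, mk_mem_liftSet.mpr fun w => LinearMap.congr_fun hB w⟩

theorem opair_obr_of_mem_liftSet {A B C : V →ₗ[ℝ] V} (u : V) {a b : W} {δ : W →ₗ[ℝ] W}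
    (hδ : ∀ w : W, (δ w : V) = A w)
    (hB : (B, (a : V)) ∈ liftSet W br) (hC : (C, (b : V)) ∈ liftSet W br) :
    opair (obr (A, u) (B, (a : V))) (C, (b : V)) =
      ((1 / 2 : ℝ) • (δ (br a b) - br a (δ b) + br b (δ a)) : W) := by
  rw [mk_mem_liftSet] at hB hC
  simp only [opair_obr, hB, hC, ← hδ, Submodule.coe_smul, Submodule.coe_add, Submodule.coe_sub]

theorem apply_mem_of_forall_opair_obr_eq {A : V →ₗ[ℝ] V} {u : V} {Ω : W → W → V}
    (hco : ∀ (B₁ : V →ₗ[ℝ] V) (v₁ : W), (B₁, (v₁ : V)) ∈ liftSet W br →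
      ∀ (B₂ : V →ₗ[ℝ] V) (v₂ : W), (B₂, (v₂ : V)) ∈ liftSet W br →
        Ω v₁ v₂ = -opair (obr (A, u) (B₁, (v₁ : V))) (B₂, (v₂ : V)))
    {w : V} (hw : w ∈ W) : A w ∈ W := by
  obtain ⟨C, hC⟩ := exists_mk_mem_liftSet br ⟨w, hw⟩
  refine mem_iff_forall_end_apply_eq_zero.mpr fun B hB => ?_
  have hzero : ((0 : V →ₗ[ℝ] V), (0 : V)) ∈ liftSet W br :=
    mk_zero_mem_liftSet_s19.mpr fun _ _ => rfl
  have hpair : opair (obr (A, u) (B, 0)) (C, w) = opair (obr (A, u) (0, 0)) (C, w) :=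
    neg_injective <| (hco B 0 (mk_zero_mem_liftSet_s19.mpr hB) C ⟨w, hw⟩ hC).symm.trans
      (hco 0 0 hzero C ⟨w, hw⟩ hC)
  have hBw : B w = 0 := hB hw
  simpa [opair_obr, hBw] using hpair

theorem coboundary_deformation_formula_general (W : Submodule ℝ V) (br : W →ₗ[ℝ] W →ₗ[ℝ] W)
    (hskew : ∀ v w : W, br v w = -br w v) (Ω : W → W → V) (A : V →ₗ[ℝ] V) (u : V)
    (hco : ∀ (B₁ : V →ₗ[ℝ] V) (v₁ : W), (B₁, (v₁ : V)) ∈ liftSet W br →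
      ∀ (B₂ : V →ₗ[ℝ] V) (v₂ : W), (B₂, (v₂ : V)) ∈ liftSet W br →
        Ω v₁ v₂ = -opair (obr (A, u) (B₁, (v₁ : V))) (B₂, (v₂ : V))) :
    ∃ δ : W →ₗ[ℝ] W,
      (∀ w : W, (δ w : V) = A w) ∧
      (∀ a b : W, Ω a b = ((1 / 2 : ℝ) • (br (δ a) b + br a (δ b) - δ (br a b)) : W)) := by
  have hA : ∀ w ∈ W, A w ∈ W := fun _ => apply_mem_of_forall_opair_obr_eq hco
  have hδ : ∀ w : W, (A.restrict hA w : V) = A w := LinearMap.coe_restrict_apply hA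
  refine ⟨A.restrict hA, hδ, fun a b => ?_⟩
  obtain ⟨B, hB⟩ := exists_mk_mem_liftSet br a
  obtain ⟨C, hC⟩ := exists_mk_mem_liftSet br b
  rw [hco B a hB C b hC, opair_obr_of_mem_liftSet u hδ hB hC, hskew b, ← Submodule.coe_neg]
  congr 1
  module

end LiftedDirac

/-- If `Ω(𝐛(l₁),𝐛(l₂)) = −⟨⦃X,l₁⦄,l₂⟩` for all `l₁, l₂ ∈ L_W`, where `X = (A,u)`,
then `A(W) ⊆ W` and `Ω(a,b) = (1/2)·([A(a),b] + [a,A(b)] − A([a,b]))` on `W`. -/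
theorem coboundary_deformation_formula (W : Submodule ℝ V) (br : W →ₗ[ℝ] W →ₗ[ℝ] W)
    (hskew : ∀ v w : W, br v w = - br w v)
    (hjacobi : ∀ u v w : W, br u (br v w) + br v (br w u) + br w (br u v) = 0)
    (Ω : W →ₗ[ℝ] W →ₗ[ℝ] W) (hΩ : ∀ a b : W, Ω a b = - Ω b a)
    (A : V →ₗ[ℝ] V) (u : V)
    (hco : ∀ (B₁ : V →ₗ[ℝ] V) (v₁ : W), (B₁, (v₁ : V)) ∈ liftSet W br →
      ∀ (B₂ : V →ₗ[ℝ] V) (v₂ : W), (B₂, (v₂ : V)) ∈ liftSet W br →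
        (Ω v₁ v₂ : V) = - opair (obr (A, u) (B₁, (v₁ : V))) (B₂, (v₂ : V))) :
    ∃ δ : W →ₗ[ℝ] W,
      (∀ w : W, (δ w : V) = A w) ∧
      (∀ a b : W, Ω a b = (1/2 : ℝ) • (br (δ a) b + br a (δ b) - δ (br a b))) := by
  obtain ⟨δ, hδ, hΩδ⟩ :=
    coboundary_deformation_formula_general W br hskew (fun a b => (Ω a b : V)) A u hco
  exact ⟨δ, hδ, fun a b => Subtype.ext (hΩδ a b)⟩
end
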